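/- Fix v ≥ 0 and define R_c(u,v) = Γ(c+u,v)/Γ(u,v) for c > 0 and u > 0, where Γ(u,v) is the upper incomplete gamma function. Then the function (c,u) ↦ R_c(u,v) is strictly totally positive of order infinity on (0,∞)²: for every r ≥ 1 and all c₁ > c₂ > ⋯ > c_r > 0 and u₁ > u₂ > ⋯ > u_r > 0, the r×r determinant det( (R_{c_i}(u_j,v))_{i,j=1}^r ) is strictly positive. -/

import Mathlib

open MeasureTheory

/-- The upper incomplete gamma function `Γ(u,v) = ∫_v^∞ x^(u-1) e^(-x) dx`. -/
noncomputable def upperGamma (u v : ℝ) : ℝ :=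
  ∫ x in Set.Ioi v, x ^ (u - 1) * Real.exp (-x)

/-!
Dividing by `Γ(u_j, v)` only rescales columns, so it suffices to treat `det Γ(c_i + u_j, v)`.
By Andréief's identity, `r!` times this determinant is the integral over `x ∈ (v, ∞)^r` of
`det (x_k ^ c_i) * det (x_k ^ (u_j - 1)) * ∏ exp (-x_k)`. Rolle's theorem shows that a generalized
Vandermonde determinant vanishes only where two nodes or two exponents coincide. Deforming the
exponents `c` linearly into `u - 1` never makes two of them coincide, so the two determinants have
the same sign and the integrand is positive almost everywhere.
-/

open Matrix (of)
open scoped Nat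

section ExponentialSums

theorem encard_zeros_le_encard_zeros_deriv_add_one {f f' : ℝ → ℝ}
    (hf : ∀ x, HasDerivAt f (f' x) x) :
    {x | f x = 0}.encard ≤ {x | f' x = 0}.encard + 1 := by
  by_contra! hlt
  have hfin : {x | f' x = 0}.Finite := Set.encard_lt_top_iff.1 (le_self_add.trans_lt
    (hlt.trans_le le_top))
  obtain ⟨T, hTsub, hTcard⟩ := Set.exists_subset_encard_eq (Order.add_one_le_of_lt hlt)
  rw [hfin.encard_eq_coe_toFinset_card] at hTcard
  have hTfin : T.Finite := Set.finite_of_encard_eq_coe (k := hfin.toFinset.card + 1 + 1)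
    (mod_cast hTcard)
  have hinterleaved : hTfin.toFinset.card ≤ hfin.toFinset.card + 1 := by
    refine Finset.card_le_of_interleaved fun x hx y hy hxy _ => ?_
    have hx0 : f x = 0 := hTsub (hTfin.mem_toFinset.1 hx)
    have hy0 : f y = 0 := hTsub (hTfin.mem_toFinset.1 hy)
    obtain ⟨z, hz, hz0⟩ := exists_hasDerivAt_eq_zero hxy
      (fun t _ => (hf t).continuousAt.continuousWithinAt) (hx0.trans hy0.symm) fun t _ => hf t
    exact ⟨z, hfin.mem_toFinset.2 hz0, hz.1, hz.2⟩
  rw [hTfin.encard_eq_coe_toFinset_card] at hTcard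
  norm_cast at hTcard
  omega

variable {ι : Type*}

theorem hasDerivAt_exp_neg_mul_sum_mul_exp (s : Finset ι) (a b : ι → ℝ) (β x : ℝ) :
    HasDerivAt (fun x => Real.exp (-(β * x)) * ∑ i ∈ s, a i * Real.exp (b i * x))
      (Real.exp (-(β * x)) * ∑ i ∈ s, a i * (b i - β) * Real.exp (b i * x)) x := by
  have hexp (γ : ℝ) : HasDerivAt (fun x => Real.exp (γ * x)) (γ * Real.exp (γ * x)) x := by
    simpa [mul_comm] using ((hasDerivAt_id x).const_mul γ).exp
  have hsum : HasDerivAt (fun x => ∑ i ∈ s, a i * Real.exp (b i * x))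
      (∑ i ∈ s, a i * (b i * Real.exp (b i * x))) x :=
    HasDerivAt.fun_sum fun i _ => (hexp (b i)).const_mul (a i)
  have hprod := (hexp (-β)).mul hsum
  simp only [neg_mul] at hprod
  refine hprod.congr_deriv ?_
  have hsplit : ∑ i ∈ s, a i * (b i - β) * Real.exp (b i * x) =
      ∑ i ∈ s, a i * (b i * Real.exp (b i * x)) - β * ∑ i ∈ s, a i * Real.exp (b i * x) := by
    rw [Finset.mul_sum, ← Finset.sum_sub_distrib]
    exact Finset.sum_congr rfl fun i _ => by ring
  rw [hsplit]
  ring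

theorem encard_zeros_sum_mul_exp_lt {s : Finset ι} {a b : ι → ℝ}
    (hb : Set.InjOn b s) (ha : ∃ i ∈ s, a i ≠ 0) :
    {x | ∑ i ∈ s, a i * Real.exp (b i * x) = 0}.encard < s.card := by
  classical
  induction s using Finset.induction_on generalizing a with
  | empty => simp at ha
  | insert j s hj ih =>
    rw [Finset.card_insert_of_notMem hj, Nat.cast_add_one]
    have hbj : ∀ i ∈ s, b i - b j ≠ 0 := fun i hi hij =>
      hj (hb (by simp [hi]) (by simp) (sub_eq_zero.1 hij) ▸ hi)
    by_cases has : ∃ i ∈ s, a i ≠ 0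
    · -- Dividing by `exp (b j * x)` before differentiating kills the term of index `j`.
      obtain ⟨i, hi, hai⟩ := has
      have hderiv := ih (a := fun i => a i * (b i - b j)) (hb.mono (by simp))
        ⟨i, hi, mul_ne_zero hai (hbj i hi)⟩
      have hrolle := encard_zeros_le_encard_zeros_deriv_add_one
        (hasDerivAt_exp_neg_mul_sum_mul_exp (insert j s) a b (b j))
      simp only [mul_eq_zero, Real.exp_ne_zero, false_or, Finset.sum_insert hj (f := fun i =>
        a i * (b i - b j) * _), sub_self, mul_zero, zero_mul, zero_add] at hrolle
      exact hrolle.trans_lt ((ENat.add_lt_add_iff_right ENat.one_ne_top).2 hderiv)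
    · push Not at has
      have haj : a j ≠ 0 := by
        obtain ⟨i, hi, hai⟩ := ha
        rcases Finset.mem_insert.1 hi with rfl | hi
        exacts [hai, absurd (has i hi) hai]
      have hsum (x : ℝ) : ∑ i ∈ s, a i * Real.exp (b i * x) = 0 :=
        Finset.sum_eq_zero fun i hi => by rw [has i hi, zero_mul]
      simp [Finset.sum_insert hj, hsum, haj]

end ExponentialSums

section GeneralizedVandermonde

variable {ι : Type*}

/-- The generalized Vandermonde matrix `(x_k ^ c_i)` with real exponents `c` and nodes `x`; as in
the kernel `(c, x) ↦ x ^ c`, the rows are indexed by the exponents. -/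
noncomputable def generalizedVandermonde (c x : ι → ℝ) : Matrix ι ι ℝ :=
  of fun i k => x k ^ c i

theorem injective_lineMap_of_monovary {c d : ι → ℝ} (hc : c.Injective) (hd : d.Injective)
    (hcd : Monovary c d) {s : ℝ} (hs : s ∈ Set.Icc (0 : ℝ) 1) :
    (AffineMap.lineMap c d s).Injective := by
  have hlt {i j : ι} (hij : d i < d j) :
      AffineMap.lineMap (k := ℝ) c d s i < AffineMap.lineMap (k := ℝ) c d s j := by
    have hcij : c i < c j := (hcd hij).lt_of_ne (hc.ne (ne_of_apply_ne d hij.ne))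
    simp only [AffineMap.lineMap_apply_module, Pi.add_apply, Pi.smul_apply, smul_eq_mul]
    rcases hs.1.eq_or_lt with rfl | hs0
    · simpa using hcij
    · exact add_lt_add_of_le_of_lt (mul_le_mul_of_nonneg_left hcij.le (sub_nonneg.2 hs.2))
        (mul_lt_mul_of_pos_left hij hs0)
  intro i j hij
  by_contra hne
  rcases (hd.ne hne).lt_or_gt with h | h
  exacts [(hlt h).ne hij, (hlt h).ne' hij]

variable [Fintype ι] [DecidableEq ι]

theorem det_generalizedVandermonde_ne_zero {c x : ι → ℝ} (hc : c.Injective) (hx : x.Injective)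
    (hx0 : ∀ k, 0 < x k) : (generalizedVandermonde c x).det ≠ 0 := by
  intro hdet
  obtain ⟨a, ha, hker⟩ := Matrix.exists_vecMul_eq_zero_iff.2 hdet
  have hzero (k : ι) : ∑ i, a i * Real.exp (c i * Real.log (x k)) = 0 := by
    simpa [Matrix.vecMul, dotProduct, generalizedVandermonde, Real.rpow_def_of_pos (hx0 k),
      mul_comm] using congrFun hker k
  have hlog : (fun k => Real.log (x k)).Injective := fun i j hij =>
    hx (Real.log_injOn_pos (hx0 i) (hx0 j) hij)
  have hlt := encard_zeros_sum_mul_exp_lt (s := Finset.univ) hc.injOn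
    (by simpa using Function.ne_iff.1 ha)
  refine (hlt.trans_le ?_).false
  rw [Finset.card_univ, ← ENat.card_eq_coe_fintype_card]
  exact hlog.encard_range.trans (Set.encard_le_encard (Set.range_subset_iff.2 hzero))

theorem continuous_det_generalizedVandermonde {x : ι → ℝ} (hx0 : ∀ k, 0 < x k) :
    Continuous fun c : ι → ℝ => (generalizedVandermonde c x).det :=
  Continuous.matrix_det <| continuous_matrix fun i k =>
    continuous_const.rpow (continuous_apply i) fun _ => Or.inl (hx0 k).ne'

theorem det_generalizedVandermonde_mul_det_pos {c d x : ι → ℝ} (hc : c.Injective)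
    (hd : d.Injective) (hcd : Monovary c d) (hx : x.Injective) (hx0 : ∀ k, 0 < x k) :
    0 < (generalizedVandermonde c x).det * (generalizedVandermonde d x).det := by
  set D : ℝ → ℝ := fun s => (generalizedVandermonde (AffineMap.lineMap c d s) x).det *
    (generalizedVandermonde d x).det with hD
  have hcont : Continuous D :=
    ((continuous_det_generalizedVandermonde hx0).comp AffineMap.lineMap_continuous).mul
      continuous_const
  have hne : ∀ s ∈ Set.Icc (0 : ℝ) 1, D s ≠ 0 := fun s hs => mul_ne_zero
    (det_generalizedVandermonde_ne_zero (injective_lineMap_of_monovary hc hd hcd hs) hx hx0)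
    (det_generalizedVandermonde_ne_zero hd hx hx0)
  have hD1 : 0 < D 1 := by
    refine lt_of_le_of_ne ?_ (hne 1 (by simp)).symm
    simpa only [hD, AffineMap.lineMap_apply_one] using mul_self_nonneg _
  suffices hD0 : 0 < D 0 by simpa only [hD, AffineMap.lineMap_apply_zero] using hD0
  by_contra! hD0
  obtain ⟨s, hs, hs0⟩ := intermediate_value_Icc zero_le_one hcont.continuousOn ⟨hD0, hD1.le⟩
  exact hne s hs hs0

end GeneralizedVandermonde

section Andreief

variable {ι : Type*} [Fintype ι] {α : Type*} [MeasurableSpace α] {μ : Measure α} [SigmaFinite μ]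

theorem integrable_prod_comp_mul_comp {𝕜 : Type*} [RCLike 𝕜] {f g : ι → α → 𝕜}
    (hfg : ∀ i j, Integrable (fun x => f i x * g j x) μ) (σ τ : ι → ι) :
    Integrable (fun x : ι → α => ∏ k, (f (σ k) (x k) * g (τ k) (x k)))
      (Measure.pi fun _ => μ) :=
  Integrable.fintype_prod (f := fun k y => f (σ k) y * g (τ k) y) fun k => hfg (σ k) (τ k)

theorem ae_pi_injective [MeasurableEq α] [NullSingletonClass μ] :
    ∀ᵐ x ∂(Measure.pi fun _ : ι => μ), x.Injective := by
  classical
  have hne (i j : ι) (hij : i ≠ j) : ∀ᵐ x ∂(Measure.pi fun _ : ι => μ), x i ≠ x j := by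
    let S : Set (({k // k = j} → α) × ({k // k ≠ j} → α)) := {z | z.2 ⟨i, hij⟩ = z.1 ⟨j, rfl⟩}
    have hS : MeasurableSet S := measurableSet_eq_fun (by fun_prop) (by fun_prop)
    have hpres := measurePreserving_piEquivPiSubtypeProd (fun _ : ι => μ) (· = j)
    refine measure_eq_zero_iff_ae_notMem.1 ((hpres.measure_preimage hS.nullMeasurableSet).trans ?_)
    exact (Measure.measure_prod_null hS).2 <| .of_forall fun y =>
      Measure.pi_hyperplane (fun _ => μ) (⟨i, hij⟩ : {k // k ≠ j}) (y ⟨j, rfl⟩)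
  filter_upwards [ae_all_iff.2 fun i => ae_all_iff.2 fun j => ae_all_iff.2 (hne i j)]
    with x hx i j
  exact not_imp_not.1 (hx i j)

variable [DecidableEq ι]

theorem sum_perm_sum_perm_sign_mul_prod {R : Type*} [CommRing R] (M : Matrix ι ι R) :
    ∑ σ : Equiv.Perm ι, ∑ τ : Equiv.Perm ι, (σ.sign * τ.sign : R) * ∏ k, M (σ k) (τ k) =
      (Fintype.card ι)! * M.det := by
  have hrow (σ : Equiv.Perm ι) :
      ∑ τ : Equiv.Perm ι, (σ.sign * τ.sign : R) * ∏ k, M (σ k) (τ k) = M.det := by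
    have hsubmatrix : ∑ τ : Equiv.Perm ι, (τ.sign : R) * ∏ k, M (σ k) (τ k) =
        (M.submatrix σ id).det := by
      rw [← Matrix.det_transpose, Matrix.det_apply']
      rfl
    simp only [mul_assoc]
    rw [← Finset.mul_sum, hsubmatrix, Matrix.det_permute, ← mul_assoc, ← Int.cast_mul,
      Int.units_coe_mul_self, Int.cast_one, one_mul]
  simp only [hrow, Finset.sum_const, Finset.card_univ, Fintype.card_perm, nsmul_eq_mul]

theorem det_mul_det_eq_sum_perm {R : Type*} [CommRing R] (A B : Matrix ι ι R) :
    A.det * B.det = ∑ σ : Equiv.Perm ι, ∑ τ : Equiv.Perm ι,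
      (σ.sign * τ.sign : R) * ∏ k, (A (σ k) k * B (τ k) k) := by
  simp only [Matrix.det_apply', Finset.sum_mul_sum, Finset.prod_mul_distrib, mul_mul_mul_comm]

section RCLike

variable {𝕜 : Type*} [RCLike 𝕜] {f g : ι → α → 𝕜}

theorem integrable_det_mul_det (hfg : ∀ i j, Integrable (fun x => f i x * g j x) μ) :
    Integrable (fun x : ι → α => (of fun i k => f i (x k)).det * (of fun i k => g i (x k)).det)
      (Measure.pi fun _ => μ) := by
  simp only [det_mul_det_eq_sum_perm, Matrix.of_apply]
  exact integrable_finsetSum _ fun σ _ => integrable_finsetSum _ fun τ _ =>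
    (integrable_prod_comp_mul_comp hfg σ τ).const_mul _

/-- **Andréief's identity**, the continuous form of the Cauchy–Binet formula. -/
theorem integral_det_mul_det (hfg : ∀ i j, Integrable (fun x => f i x * g j x) μ) :
    ∫ x : ι → α, (of fun i k => f i (x k)).det * (of fun i k => g i (x k)).det
        ∂(Measure.pi fun _ => μ) =
      (Fintype.card ι)! * (of fun i j => ∫ x, f i x * g j x ∂μ).det := by
  have hint (σ τ : Equiv.Perm ι) : Integrable (fun x : ι → α =>
      (σ.sign * τ.sign : 𝕜) * ∏ k, (f (σ k) (x k) * g (τ k) (x k))) (Measure.pi fun _ => μ) :=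
    (integrable_prod_comp_mul_comp hfg σ τ).const_mul _
  simp only [det_mul_det_eq_sum_perm, Matrix.of_apply]
  rw [integral_finsetSum _ fun σ _ => integrable_finsetSum _ fun τ _ => hint σ τ,
    ← sum_perm_sum_perm_sign_mul_prod]
  refine Finset.sum_congr rfl fun σ _ => ?_
  rw [integral_finsetSum _ fun τ _ => hint σ τ]
  refine Finset.sum_congr rfl fun τ _ => ?_
  rw [integral_const_mul]
  exact congrArg _ (integral_fintype_prod_eq_prod fun k y => f (σ k) y * g (τ k) y)

end RCLike

theorem det_integral_mul_pos [NeZero μ] {f g : ι → α → ℝ}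
    (hfg : ∀ i j, Integrable (fun x => f i x * g j x) μ)
    (hpos : ∀ᵐ x ∂(Measure.pi fun _ : ι => μ),
      0 < (of fun i k => f i (x k)).det * (of fun i k => g i (x k)).det) :
    0 < (of fun i j => ∫ x, f i x * g j x ∂μ).det := by
  have huniv : 0 < Measure.pi (fun _ : ι => μ) Set.univ := by
    rw [Measure.pi_univ]
    exact (Finset.prod_ne_zero_iff.2 fun _ _ =>
      Measure.measure_univ_ne_zero.2 (NeZero.ne μ)).bot_lt
  have hint : 0 < ∫ x : ι → α, (of fun i k => f i (x k)).det * (of fun i k => g i (x k)).det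
      ∂(Measure.pi fun _ => μ) := by
    rw [integral_pos_iff_support_of_nonneg_ae (hpos.mono fun _ h => h.le)
      (integrable_det_mul_det hfg)]
    have hsupport := measure_congr (Filter.eventuallyEq_univ.2 (hpos.mono fun _ h => h.ne'))
    exact hsupport ▸ huniv
  rw [integral_det_mul_det hfg] at hint
  exact pos_of_mul_pos_right hint (Nat.cast_nonneg _)

end Andreief

section UpperGamma

variable {v : ℝ}

theorem integrableOn_rpow_mul_exp_neg_Ioi {u : ℝ} (hv : 0 ≤ v) (hu : 0 < v ∨ 0 < u) :
    IntegrableOn (fun x => x ^ (u - 1) * Real.exp (-x)) (Set.Ioi v) := by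
  simp only [mul_comm (_ ^ _)]
  rcases hu with hv | hu
  · refine integrable_of_isBigO_exp_neg one_half_pos ?_ (Real.Gamma_integrand_isLittleO _).isBigO
    exact continuousOn_id.neg.rexp.mul
      (continuousOn_id.rpow_const fun x hx => Or.inl (hv.trans_le hx).ne')
  · exact (Real.GammaIntegral_convergent hu).mono_set (Set.Ioi_subset_Ioi hv)

theorem upperGamma_pos {u : ℝ} (hv : 0 ≤ v) (hu : 0 < v ∨ 0 < u) : 0 < upperGamma u v := by
  have hpos : ∀ x ∈ Set.Ioi v, 0 < x ^ (u - 1) * Real.exp (-x) := fun x hx =>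
    mul_pos (Real.rpow_pos_of_pos (hv.trans_lt hx) _) (Real.exp_pos _)
  have hsupport : Set.Ioi v ⊆ Function.support fun x => x ^ (u - 1) * Real.exp (-x) :=
    fun x hx => (hpos x hx).ne'
  rw [upperGamma, setIntegral_pos_iff_support_of_nonneg_ae
    (ae_restrict_of_forall_mem measurableSet_Ioi fun x hx => (hpos x hx).le)
    (integrableOn_rpow_mul_exp_neg_Ioi hv hu), Set.inter_eq_right.2 hsupport, Real.volume_Ioi]
  exact ENNReal.zero_lt_top

variable {ι : Type*} [Fintype ι] [DecidableEq ι] {c u : ι → ℝ}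

theorem det_upperGamma_add_pos (hv : 0 ≤ v) (hcu : ∀ i j, 0 < v ∨ 0 < c i + u j)
    (hc : c.Injective) (hu : u.Injective) (hmono : Monovary c u) :
    0 < (of fun i j => upperGamma (c i + u j) v).det := by
  set μ : Measure ℝ := volume.restrict (Set.Ioi v) with hμ
  have : NeZero μ := ⟨by simp [hμ]⟩
  let f (i : ι) (x : ℝ) : ℝ := x ^ c i
  let g (j : ι) (x : ℝ) : ℝ := Real.exp (-x) * x ^ (u j - 1)
  have hfg (i j : ι) :
      Set.EqOn (fun x => x ^ (c i + u j - 1) * Real.exp (-x)) (fun x => f i x * g j x)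
        (Set.Ioi v) := fun x hx => by
    simp only [f, g, add_sub_assoc, Real.rpow_add (hv.trans_lt hx)]
    ring
  have hint (i j : ι) : Integrable (fun x => f i x * g j x) μ :=
    (integrableOn_rpow_mul_exp_neg_Ioi hv (hcu i j)).congr_fun (hfg i j) measurableSet_Ioi
  have hentry (i j : ι) : upperGamma (c i + u j) v = ∫ x, f i x * g j x ∂μ :=
    setIntegral_congr_fun measurableSet_Ioi (hfg i j)
  simp only [hentry]
  refine det_integral_mul_pos hint ?_
  have hμpos : ∀ᵐ x ∂(Measure.pi fun _ : ι => μ), ∀ k, 0 < x k := ae_all_iff.2 fun _ =>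
    Measure.tendsto_eval_ae_ae.eventually
      (ae_restrict_of_forall_mem measurableSet_Ioi fun _ hx => hv.trans_lt hx)
  filter_upwards [hμpos, ae_pi_injective] with x hx0 hx
  have hg : (of fun j k => g j (x k)).det =
      (∏ k, Real.exp (-x k)) * (generalizedVandermonde (fun j => u j - 1) x).det :=
    Matrix.det_mul_row _ _
  rw [hg, mul_left_comm]
  exact mul_pos (Finset.prod_pos fun k _ => Real.exp_pos _)
    (det_generalizedVandermonde_mul_det_pos hc (fun i j hij => hu (sub_left_injective hij))
      (fun i j hij => hmono ((sub_lt_sub_iff_right 1).1 hij)) hx hx0)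

theorem stmt_5_general (hv : 0 ≤ v) (hu0 : ∀ j, 0 < v ∨ 0 < u j)
    (hcu : ∀ i j, 0 < v ∨ 0 < c i + u j) (hc : c.Injective) (hu : u.Injective)
    (hmono : Monovary c u) :
    0 < (of fun i j => upperGamma (c i + u j) v / upperGamma (u j) v).det := by
  have hscale : (of fun i j => upperGamma (c i + u j) v / upperGamma (u j) v).det =
      (∏ j, (upperGamma (u j) v)⁻¹) * (of fun i j => upperGamma (c i + u j) v).det := by
    simp only [div_eq_inv_mul]
    exact Matrix.det_mul_row _ _
  rw [hscale]
  exact mul_pos (Finset.prod_pos fun j _ => inv_pos.2 (upperGamma_pos hv (hu0 j)))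
    (det_upperGamma_add_pos hv hcu hc hu hmono)

end UpperGamma

/-- For fixed `v ≥ 0`, the function `(c,u) ↦ R_c(u,v) = Γ(c+u,v)/Γ(u,v)`
is strictly totally positive of order infinity on `(0,∞)²`. -/
theorem stmt_5 (v : ℝ) (hv : 0 ≤ v) :
    ∀ r : ℕ, 1 ≤ r → ∀ c u : Fin r → ℝ,
      (∀ i : Fin r, 0 < c i) → (∀ i : Fin r, 0 < u i) →
      (∀ i j : Fin r, i < j → c j < c i) →
      (∀ i j : Fin r, i < j → u j < u i) →
      0 < Matrix.det (Matrix.of fun i j : Fin r =>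
        upperGamma (c i + u j) v / upperGamma (u j) v) := by
  intro r _ c u hc0 hu0 (hc : StrictAnti c) (hu : StrictAnti u)
  exact stmt_5_general hv (fun j => .inr (hu0 j)) (fun i j => .inr (add_pos (hc0 i) (hu0 j)))
    hc.injective hu.injective (hc.antitone.monovary hu.antitone)
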